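/- Step-size bound for the exact mirror-descent step (Lemma 2(b)): Let K ⊆ E be a nonempty convex set, let ω : E → ℝ be differentiable and σ-strongly convex with respect to N on K (σ > 0), let x₀ ∈ K, let g ∈ E with N_*(g) ≤ G_ℓ, let r : E → ℝ be convex and G_r-Lipschitz with respect to N on K, and let η > 0. If y* ∈ K minimizes F(x) = ⟪g, x⟫ + r(x) + (1/η) V_ω(x, x₀) over K, then N(y* − x₀) ≤ (G_ℓ + G_r) η / σ. -/

import Mathlib

open scoped RealInnerProductSpace

/-- Euclidean space `ℝ^d` with the Euclidean inner product. -/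
abbrev Euc (d : ℕ) := EuclideanSpace ℝ (Fin d)

/-- The dual norm of `N`: `N_*(g) = sup {⟪g, x⟫ : N x ≤ 1}`. -/
noncomputable def dualNorm (d : ℕ) (N : Euc d → ℝ) (g : Euc d) : ℝ :=
  sSup ((fun x => ⟪g, x⟫) '' {x : Euc d | N x ≤ 1})

/-!
On a segment ending at a minimizer `y` of `f + φ`, strong convexity of `φ` and the Lipschitz bound
on `f` give, at first order at `y`, the growth estimate
`σ / 2 * N (x - y) ^ 2 ≤ φ x - φ y + L * N (x - y)`. Apply it twice to `φ = V_ω(·, x₀)`: once to its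
own minimizer `x₀` (with `f = 0`), and once to the minimizer `y*` of the objective multiplied by
`η` (with `L = η (G_ℓ + G_r)`), comparing with `x = x₀`. Adding the two estimates,
`σ N(y* - x₀)² ≤ η (G_ℓ + G_r) N(y* - x₀)`.
-/

section StrongConvexity

variable {E : Type*} [AddCommGroup E] [Module ℝ E] {N : Seminorm ℝ E} {K : Set E} {σ : ℝ}

/-- Strong convexity with modulus `σ` on `K` with respect to a seminorm `N`, as in Mathlib's
`StrongConvexOn`, which is tied to the norm of the ambient space. -/
def SeminormStrongConvexOn (N : Seminorm ℝ E) (K : Set E) (σ : ℝ) (φ : E → ℝ) : Prop :=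
  Convex ℝ K ∧ ∀ ⦃x⦄, x ∈ K → ∀ ⦃y⦄, y ∈ K → ∀ ⦃a b : ℝ⦄, 0 ≤ a → 0 ≤ b → a + b = 1 →
    φ (a • x + b • y) ≤ a * φ x + b * φ y - a * b * (σ / 2 * N (x - y) ^ 2)

/-- The Bregman divergence `V_ω(x, y)`, with an arbitrary linear functional `p` (typically a
subgradient of `ω` at `y`) in the place of `⟪∇ω(y), ·⟫`. -/
def bregmanDiv (ω : E → ℝ) (p : Module.Dual ℝ E) (x y : E) : ℝ :=
  ω x - ω y - p (x - y)

@[simp]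
lemma bregmanDiv_self (ω : E → ℝ) (p : Module.Dual ℝ E) (x : E) : bregmanDiv ω p x x = 0 := by
  simp [bregmanDiv]

lemma SeminormStrongConvexOn.of_le_bregmanDiv {ω : E → ℝ} {ω' : E → Module.Dual ℝ E}
    (hK : Convex ℝ K)
    (hω : ∀ x ∈ K, ∀ y ∈ K, σ / 2 * N (x - y) ^ 2 ≤ bregmanDiv ω (ω' y) x y) :
    SeminormStrongConvexOn N K σ ω := by
  refine ⟨hK, fun x hx y hy a b ha hb hab ↦ ?_⟩
  set z := a • x + b • y with hz
  have hzK : z ∈ K := hK hx hy ha hb hab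
  obtain rfl : b = 1 - a := by linarith
  have hxz : x - z = (1 - a) • (x - y) := by rw [hz]; module
  have hyz : y - z = (-a) • (x - y) := by rw [hz]; module
  have hωx := hω x hx z hzK
  have hωy := hω y hy z hzK
  simp only [bregmanDiv, hxz, hyz, map_smul_eq_mul, map_smul, smul_eq_mul, norm_neg,
    Real.norm_of_nonneg ha, Real.norm_of_nonneg hb] at hωx hωy
  linarith [mul_le_mul_of_nonneg_left hωx ha, mul_le_mul_of_nonneg_left hωy hb]

lemma SeminormStrongConvexOn.bregmanDiv_left {ω : E → ℝ} (hω : SeminormStrongConvexOn N K σ ω)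
    (p : Module.Dual ℝ E) (x₀ : E) :
    SeminormStrongConvexOn N K σ (fun x ↦ bregmanDiv ω p x x₀) := by
  refine ⟨hω.1, fun x hx y hy a b ha hb hab ↦ ?_⟩
  have hωxy := hω.2 hx hy ha hb hab
  simp only [bregmanDiv, map_sub, map_add, map_smul, smul_eq_mul]
  obtain rfl : b = 1 - a := by linarith
  linarith

theorem SeminormStrongConvexOn.le_sub_add_of_isMinOn_add {f φ : E → ℝ} {L : ℝ} {x y : E}
    (hφ : SeminormStrongConvexOn N K σ φ) (hx : x ∈ K) (hy : y ∈ K)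
    (hf : ∀ u ∈ K, f u - f y ≤ L * N (u - y)) (hmin : IsMinOn (fun u ↦ f u + φ u) K y) :
    σ / 2 * N (x - y) ^ 2 ≤ φ x - φ y + L * N (x - y) := by
  set M := σ / 2 * N (x - y) ^ 2
  have near_y : ∀ b ∈ Set.Ioo (0 : ℝ) 1, b * M ≤ φ x - φ y + L * N (x - y) := by
    rintro b ⟨hb0, hb1⟩
    have ha : 0 < 1 - b := sub_pos.2 hb1
    set z := (1 - b) • x + b • y with hz
    have hzK : z ∈ K := hφ.1 hx hy ha.le hb0.le (sub_add_cancel 1 b)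
    have hzy : N (z - y) = (1 - b) * N (x - y) := by
      rw [show z - y = (1 - b) • (x - y) by rw [hz]; module, map_smul_eq_mul,
        Real.norm_of_nonneg ha.le]
    have hfz : f z - f y ≤ L * ((1 - b) * N (x - y)) := hzy ▸ hf z hzK
    have hφz : φ z ≤ (1 - b) * φ x + b * φ y - (1 - b) * b * M :=
      hφ.2 hx hy ha.le hb0.le (sub_add_cancel 1 b)
    have hyz : f y + φ y ≤ f z + φ z := hmin hzK
    refine le_of_mul_le_mul_left ?_ ha
    linarith
  have hlim : Filter.Tendsto (fun b : ℝ ↦ b * M) (nhdsWithin 1 (Set.Iio 1)) (nhds M) := by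
    have hcont : Continuous fun b : ℝ ↦ b * M := continuous_mul_const M
    simpa using hcont.continuousWithinAt.tendsto (x := 1) (s := Set.Iio 1)
  exact le_of_tendsto hlim (Filter.eventually_of_mem (Ioo_mem_nhdsLT one_pos) near_y)

theorem exact_step_size_bound_general {ω r : E → ℝ} {p g : Module.Dual ℝ E} {Gℓ Gr η : ℝ}
    {x₀ y : E} (hσ : 0 < σ) (hω : SeminormStrongConvexOn N K σ ω)
    (hx₀ : x₀ ∈ K) (hp : ∀ x ∈ K, 0 ≤ bregmanDiv ω p x x₀)
    (hGℓ : 0 ≤ Gℓ) (hg : ∀ x, g x ≤ Gℓ * N x)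
    (hGr : 0 ≤ Gr) (hr : ∀ u ∈ K, ∀ v ∈ K, |r u - r v| ≤ Gr * N (u - v)) (hη : 0 < η)
    (hy : y ∈ K) (hmin : IsMinOn (fun u ↦ g u + r u + 1 / η * bregmanDiv ω p u x₀) K y) :
    N (y - x₀) ≤ (Gℓ + Gr) * η / σ := by
  have hV := hω.bregmanDiv_left p x₀
  have growth_x₀ : σ / 2 * N (y - x₀) ^ 2 ≤ bregmanDiv ω p y x₀ := by
    simpa using hV.le_sub_add_of_isMinOn_add (f := 0) (L := 0) hy hx₀ (by simp)
      (by simpa [IsMinOn, IsMinFilter] using hp)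
  have hf : ∀ u ∈ K, η * (g u + r u) - η * (g y + r y) ≤ η * (Gℓ + Gr) * N (u - y) := by
    intro u hu
    have hgu := hg (u - y)
    rw [map_sub] at hgu
    linarith [mul_le_mul_of_nonneg_left (add_le_add hgu (le_of_abs_le (hr u hu y hy))) hη.le]
  have hmin_mul : IsMinOn (fun u ↦ η * (g u + r u) + bregmanDiv ω p u x₀) K y := by
    intro u hu
    have h := mul_le_mul_of_nonneg_left (hmin hu) hη.le
    simpa [mul_add, hη.ne'] using h
  have growth_y := hV.le_sub_add_of_isMinOn_add hx₀ hy hf hmin_mul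
  rw [bregmanDiv_self, map_sub_rev] at growth_y
  rw [le_div_iff₀ hσ]
  rcases (apply_nonneg N (y - x₀)).eq_or_lt with hN | hN
  · rw [← hN, zero_mul]; positivity
  · exact le_of_mul_le_mul_right (by linarith) hN

end StrongConvexity

theorem exists_forall_dual_le_mul_seminorm {E : Type*} [AddCommGroup E] [Module ℝ E]
    [FiniteDimensional ℝ E] (N : Seminorm ℝ E) (hN : ∀ x, x ≠ 0 → 0 < N x)
    (f : Module.Dual ℝ E) : ∃ C, ∀ x, f x ≤ C * N x := by
  let _ : Norm E := ⟨N⟩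
  have core : NormedSpace.Core ℝ E :=
    { norm_nonneg := apply_nonneg N
      norm_smul := map_smul_eq_mul N
      norm_triangle := map_add_le_add N
      norm_eq_zero_iff := fun x ↦
        ⟨fun hx ↦ by_contra fun h ↦ (hN x h).ne' hx, fun hx ↦ hx ▸ map_zero N⟩ }
  let _ := NormedAddCommGroup.ofCore core
  let _ := NormedSpace.ofCore core
  exact ⟨_, fun x ↦ (le_abs_self _).trans (f.toContinuousLinearMap.le_opNorm x)⟩

theorem inner_le_dualNorm_mul {d : ℕ} (N : Seminorm ℝ (Euc d)) (hN : ∀ x, x ≠ 0 → 0 < N x)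
    (g x : Euc d) : ⟪g, x⟫ ≤ dualNorm d N g * N x := by
  rcases eq_or_ne x 0 with rfl | hx
  · simp
  obtain ⟨C, hC⟩ := exists_forall_dual_le_mul_seminorm N hN (innerₗ (Euc d) g)
  have hbdd : BddAbove ((fun x ↦ ⟪g, x⟫) '' {x : Euc d | N x ≤ 1}) := by
    refine ⟨|C|, Set.forall_mem_image.2 fun u hu ↦ (hC u).trans ?_⟩
    calc C * N u ≤ |C| * N u := by gcongr; exact le_abs_self C
      _ ≤ |C| := mul_le_of_le_one_right (abs_nonneg C) hu
  have hunit : N ((N x)⁻¹ • x) ≤ 1 := by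
    rw [map_smul_eq_mul, norm_inv, Real.norm_of_nonneg (apply_nonneg N x),
      inv_mul_cancel₀ (hN x hx).ne']
  have hsup : ⟪g, (N x)⁻¹ • x⟫ ≤ dualNorm d N g := le_csSup hbdd ⟨_, hunit, rfl⟩
  rwa [real_inner_smul_right, inv_mul_le_iff₀ (hN x hx), mul_comm] at hsup

/-- **Step-size bound for the exact mirror-descent step (Lemma 2(b)).**
If `ω` is `σ`-strongly convex w.r.t. a norm `N` on a nonempty convex set `K`,
`N_*(g) ≤ G_ℓ`, `r` is convex and `G_r`-Lipschitz w.r.t. `N` on `K`, `η > 0`, and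
`y*` minimizes `F x = ⟪g, x⟫ + r x + (1/η) V_ω(x, x₀)` over `K`, then
`N(y* - x₀) ≤ (G_ℓ + G_r) η / σ`. -/
theorem exact_step_size_bound
    (d : ℕ) (hd : 1 ≤ d)
    -- N is a norm on ℝ^d
    (N : Euc d → ℝ)
    (hN_add : ∀ x y, N (x + y) ≤ N x + N y)
    (hN_smul : ∀ (c : ℝ) (x : Euc d), N (c • x) = |c| * N x)
    (hN_pos : ∀ x : Euc d, x ≠ 0 → 0 < N x)
    -- K is a nonempty convex set
    (K : Set (Euc d)) (hKne : K.Nonempty) (hKconv : Convex ℝ K)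
    -- ω is differentiable with gradient ω', Bregman divergence V
    (ω : Euc d → ℝ) (ω' : Euc d → Euc d)
    (hgrad : ∀ x, HasGradientAt ω (ω' x) x)
    (V : Euc d → Euc d → ℝ)
    (hV : ∀ x y, V x y = ω x - ω y - ⟪ω' y, x - y⟫)
    -- ω is σ-strongly convex w.r.t. N on K
    (σ : ℝ) (hσ : 0 < σ)
    (hstrong : ∀ x ∈ K, ∀ y ∈ K, ω x ≥ ω y + ⟪ω' y, x - y⟫ + σ / 2 * N (x - y) ^ 2)
    -- data of the mirror-descent step
    (x₀ : Euc d) (hx₀ : x₀ ∈ K)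
    (g : Euc d) (Gℓ : ℝ) (hGℓ : 0 ≤ Gℓ) (hg : dualNorm d N g ≤ Gℓ)
    (r : Euc d → ℝ) (hrconv : ConvexOn ℝ Set.univ r)
    (Gr : ℝ) (hGr : 0 ≤ Gr)
    (hrlip : ∀ x ∈ K, ∀ y ∈ K, |r x - r y| ≤ Gr * N (x - y))
    (η : ℝ) (hη : 0 < η)
    (F : Euc d → ℝ)
    (hF : ∀ u, F u = ⟪g, u⟫ + r u + 1 / η * V u x₀)
    (ystar : Euc d) (hystarK : ystar ∈ K)
    (hmin : ∀ u ∈ K, F ystar ≤ F u) :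
    N (ystar - x₀) ≤ (Gℓ + Gr) * η / σ := by
  let Nₛ : Seminorm ℝ (Euc d) := Seminorm.of N hN_add hN_smul
  have hdual : ∀ x, ⟪g, x⟫ ≤ Gℓ * N x := fun x ↦
    (inner_le_dualNorm_mul Nₛ hN_pos g x).trans
      (mul_le_mul_of_nonneg_right hg (apply_nonneg Nₛ x))
  have hbreg : ∀ x ∈ K, ∀ y ∈ K,
      σ / 2 * N (x - y) ^ 2 ≤ bregmanDiv ω (innerₗ (Euc d) (ω' y)) x y := fun x hx y hy ↦ by
    rw [bregmanDiv, innerₗ_apply_apply]; linarith [hstrong x hx y hy]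
  have hsubgrad : ∀ x ∈ K, 0 ≤ bregmanDiv ω (innerₗ (Euc d) (ω' x₀)) x x₀ := fun x hx ↦
    le_trans (by positivity) (hbreg x hx x₀ hx₀)
  obtain rfl : F = fun u ↦ innerₗ (Euc d) g u + r u +
      1 / η * bregmanDiv ω (innerₗ (Euc d) (ω' x₀)) u x₀ :=
    funext fun u ↦ by rw [hF, hV]; rfl
  exact exact_step_size_bound_general (N := Nₛ) hσ (.of_le_bregmanDiv hKconv hbreg)
    hx₀ hsubgrad hGℓ hdual hGr hrlip hη hystarK hmin
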